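/- arXiv:1106.0023 — 5 statements merged into one kernel-verified Lean document; each statement's English description precedes it below -/
import Mathlib

section
/- Let π ∈ S_n be a derangement with k excedances, with excedance positions i_1 < ⋯ < i_k and nonexcedance positions j_1 < ⋯ < j_{n−k}, and suppose π(i_l) = n−k+l for all 1 ≤ l ≤ k and π(j_m) = m for all 1 ≤ m ≤ n−k (the condition characterizing totally positive Schubert cells). Define subsets of {1, …, n} by R_1 = {i_1, …, i_k} and R_{ℓ+1} = (R_ℓ \ {ℓ}) ∪ {π^{-1}(ℓ)} for 1 ≤ ℓ ≤ n−1. Then ℓ ∈ R_ℓ for every 1 ≤ ℓ ≤ n; in particular each R_ℓ has exactly k elements, and (R_1, …, R_n) is the Grassmann necklace associated to π. -/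
open scoped BigOperators

/-- let `π` be a derangement of `{1,…,n}` (here `Fin n`, 0-indexed) with `k`
excedances, satisfying the TP Schubert cell condition: the excedance positions
`i_1 < ⋯ < i_k` have `π(i_l) = n−k+l` and the nonexcedance positions `j_1 < ⋯ < j_{n−k}`
have `π(j_m) = m` (stated 0-indexed below).  Define `R 0` to be the set of excedance
positions and `R (m+1) = (R m \ {m}) ∪ {π⁻¹ m}`.  Then `m ∈ R m` for all `m`; in
particular every `R m` has exactly `k` elements (so `(R 0, …, R (n-1))` is the Grassmann
necklace associated to `π`). -/
theorem tp_schubert_necklace {n k : ℕ} [NeZero n] (π : Equiv.Perm (Fin n))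
    (hder : ∀ i : Fin n, π i ≠ i)
    (hE : (Finset.univ.filter fun i : Fin n => i < π i).card = k)
    (hN : (Finset.univ.filter fun i : Fin n => π i < i).card = n - k)
    (hexc : ∀ l : Fin k,
      (π (((Finset.univ.filter fun i : Fin n => i < π i).orderIsoOfFin hE l : Fin n)) : ℕ)
        = n - k + l)
    (hnon : ∀ m : Fin (n - k),
      (π (((Finset.univ.filter fun i : Fin n => π i < i).orderIsoOfFin hN m : Fin n)) : ℕ)
        = m)
    (R : Fin n → Finset (Fin n))
    (hR0 : R 0 = Finset.univ.filter fun i : Fin n => i < π i)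
    (hRstep : ∀ m : Fin n, (m : ℕ) + 1 < n →
      R (m + 1) = insert (π⁻¹ m) (R m \ {m})) :
    (∀ m : Fin n, m ∈ R m) ∧ (∀ m : Fin n, (R m).card = k) := by
  have key : ∀ a : ℕ, ∀ h : a < n,
      (∀ i : Fin n, i ∈ R ⟨a, h⟩ ↔
        (((i : ℕ) < (π i : ℕ) ∧ (a ≤ (i : ℕ) ∨ (π i : ℕ) < a)) ∨
          ((π i : ℕ) < (i : ℕ) ∧ (π i : ℕ) < a ∧ a ≤ (i : ℕ)))) ∧
      (R ⟨a, h⟩).card = k := by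
    intro a
    induction a with
    | zero =>
      intro h
      have h0 : (⟨0, h⟩ : Fin n) = 0 := by
        apply Fin.ext
        simp
      rw [h0, hR0]
      refine ⟨fun i => ?_, hE⟩
      simp
    | succ a ih =>
      intro h
      have ha : a < n := by omega
      obtain ⟨ih1, ih2⟩ := ih ha
      have hs : (⟨a + 1, h⟩ : Fin n) = ⟨a, ha⟩ + 1 := by
        apply Fin.ext
        rw [Fin.val_add, Fin.val_one']
        simp [Nat.mod_eq_of_lt h]
      have hstep := hRstep ⟨a, ha⟩ h
      rw [hs, hstep]
      have hne : ∀ i : Fin n, (π i : ℕ) ≠ (i : ℕ) := fun i hi => hder i (Fin.ext hi)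
      have hin : ∀ i : Fin n, i = π⁻¹ ⟨a, ha⟩ ↔ (π i : ℕ) = a := by
        intro i
        rw [Equiv.Perm.eq_inv_iff_eq, Fin.ext_iff]
      constructor
      · intro i
        rw [Finset.mem_insert, Finset.mem_sdiff, Finset.mem_singleton, hin, ih1, Fin.ext_iff]
        have := hne i
        simp only
        omega
      · have hmem : (⟨a, ha⟩ : Fin n) ∈ R ⟨a, ha⟩ := by
          rw [ih1]
          have := hne ⟨a, ha⟩
          simp only at this ⊢
          omega
        have hnot : π⁻¹ ⟨a, ha⟩ ∉ R ⟨a, ha⟩ \ {⟨a, ha⟩} := by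
          rw [Finset.mem_sdiff, ih1]
          have := (hin _).1 rfl
          omega
        rw [Finset.card_insert_of_notMem hnot, Finset.sdiff_singleton_eq_erase,
          Finset.card_erase_add_one hmem, ih2]
  refine ⟨fun m => ?_, fun m => (key m m.2).2⟩
  have h1 := (key m m.2).1 m
  have h2 : (π m : ℕ) ≠ (m : ℕ) := fun hi => hder m (Fin.ext hi)
  exact h1.2 (by omega)
end

section
/- Let π ∈ S_n be a derangement with k excedances, with excedance positions i_1 < ⋯ < i_k and nonexcedance positions j_1 < ⋯ < j_{n−k}, and suppose π(i_l) = n−k+l for all 1 ≤ l ≤ k and π(j_m) = m for all 1 ≤ m ≤ n−k. Define R_1 = {i_1, …, i_k} and R_{ℓ+1} = (R_ℓ \ {ℓ}) ∪ {π^{-1}(ℓ)} for 1 ≤ ℓ ≤ n−1. Then R_{n−k+1} = {π(i_1), …, π(i_k)} = {n−k+1, n−k+2, …, n}. -/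
open scoped BigOperators

/-- with `π` a derangement of `Fin n` (0-indexed) with `k` excedances
satisfying the TP Schubert cell condition, and the Grassmann necklace `R` defined by
`R 0 = ` excedance positions, `R (m+1) = (R m \ {m}) ∪ {π⁻¹ m}`, one has
`R (n−k) = π(excedance positions) = {n−k, n−k+1, …, n−1}` (0-indexed version of
`R_{n−k+1} = {π(i_1),…,π(i_k)} = {n−k+1,…,n}`). -/
theorem tp_schubert_necklace_middle {n k : ℕ} [NeZero n]
    (hk : 0 < k) (hkn : k < n) (π : Equiv.Perm (Fin n))
    (hder : ∀ i : Fin n, π i ≠ i)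
    (hE : (Finset.univ.filter fun i : Fin n => i < π i).card = k)
    (hN : (Finset.univ.filter fun i : Fin n => π i < i).card = n - k)
    (hexc : ∀ l : Fin k,
      (π (((Finset.univ.filter fun i : Fin n => i < π i).orderIsoOfFin hE l : Fin n)) : ℕ)
        = n - k + l)
    (hnon : ∀ m : Fin (n - k),
      (π (((Finset.univ.filter fun i : Fin n => π i < i).orderIsoOfFin hN m : Fin n)) : ℕ)
        = m)
    (R : Fin n → Finset (Fin n))
    (hR0 : R 0 = Finset.univ.filter fun i : Fin n => i < π i)
    (hRstep : ∀ m : Fin n, (m : ℕ) + 1 < n →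
      R (m + 1) = insert (π⁻¹ m) (R m \ {m})) :
    R ⟨n - k, by omega⟩ =
        (Finset.univ.filter fun i : Fin n => i < π i).image π ∧
    (Finset.univ.filter fun i : Fin n => i < π i).image π =
        Finset.univ.filter fun x : Fin n => n - k ≤ (x : ℕ) := by
  have h1 : ∀ i : Fin n, i < π i → n - k ≤ (π i : ℕ) := by
    intro i hi
    have hm : i ∈ (Finset.univ.filter fun i : Fin n => i < π i) := by simpa using hi
    have h := hexc (((Finset.univ.filter fun i : Fin n => i < π i).orderIsoOfFin hE).symm ⟨i, hm⟩)
    rw [OrderIso.apply_symm_apply] at h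
    simp only at h
    omega
  have h2 : ∀ i : Fin n, π i < i → (π i : ℕ) < n - k := by
    intro i hi
    have hm : i ∈ (Finset.univ.filter fun i : Fin n => π i < i) := by simpa using hi
    have h := hnon (((Finset.univ.filter fun i : Fin n => π i < i).orderIsoOfFin hN).symm ⟨i, hm⟩)
    rw [OrderIso.apply_symm_apply] at h
    simp only at h
    rw [h]
    exact Fin.is_lt _
  have h3 : ∀ i : Fin n, i < π i ∨ π i < i := fun i => (lt_or_gt_of_ne (hder i)).symm
  have him : (Finset.univ.filter fun i : Fin n => i < π i).image π =
        Finset.univ.filter fun x : Fin n => n - k ≤ (x : ℕ) := by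
    ext y
    simp only [Finset.mem_image, Finset.mem_filter, Finset.mem_univ, true_and]
    constructor
    · rintro ⟨x, hx, rfl⟩
      exact h1 x hx
    · intro hy
      refine ⟨π⁻¹ y, ?_, by simp⟩
      rcases h3 (π⁻¹ y) with h | h
      · exact h
      · have := h2 _ h
        simp at this
        omega
  have inv : ∀ m : ℕ, ∀ hm : m < n, m ≤ n - k → ∀ x : Fin n,
      x ∈ R ⟨m, hm⟩ ↔ (m ≤ (x : ℕ) ∧ (x < π x ∨ (π x : ℕ) < m)) := by
    intro m
    induction m with
    | zero =>
      intro hm _ x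
      have : (⟨0, hm⟩ : Fin n) = 0 := by ext; simp
      rw [this, hR0]
      simp
    | succ m ih =>
      intro hm hmk x
      have e : (⟨m + 1, hm⟩ : Fin n) = ⟨m, by omega⟩ + 1 := by
        ext
        rw [Fin.val_add, Fin.val_one', Nat.add_mod_mod, Nat.mod_eq_of_lt hm]
      rw [e, hRstep _ hm, Finset.mem_insert, Finset.mem_sdiff, ih (by omega) (by omega) x,
        Finset.mem_singleton, Equiv.Perm.eq_inv_iff_eq, Fin.ext_iff, Fin.ext_iff]
      have a1 := h1 x
      have a2 := h2 x
      have a3 := h3 x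
      simp only [Fin.lt_def] at *
      omega
  refine ⟨?_, him⟩
  rw [him]
  ext x
  rw [inv _ _ le_rfl]
  have a2 := h2 x
  have a3 := h3 x
  simp only [Finset.mem_filter, Finset.mem_univ, true_and]
  tauto
end

section
/- Let A be a real k×n matrix with k ≥ 2, let 1 ≤ h < i < j < ℓ ≤ n, and let S be a (k−2)-element subset of {1, …, n} disjoint from {h, i, j, ℓ}. If Δ_{S∪{h,i}}(A) = 0 or Δ_{S∪{j,ℓ}}(A) = 0, then Δ_{S∪{h,ℓ}}(A) · Δ_{S∪{i,j}}(A) = Δ_{S∪{h,j}}(A) · Δ_{S∪{i,ℓ}}(A). -/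
open scoped BigOperators

/-- The maximal minor of a `k × n` matrix `A` on the column set `I` (columns taken in
increasing order); defined to be `0` if `I` does not have exactly `k` elements. -/
noncomputable def minor {k n : ℕ} (A : Matrix (Fin k) (Fin n) ℝ) (I : Finset (Fin n)) : ℝ :=
  if hc : I.card = k then
    Matrix.det (Matrix.of fun r c : Fin k => A r ((I.orderIsoOfFin hc c : Fin n)))
  else 0

theorem sort_insert_alt {m n : ℕ} {V : Type*} [AddCommGroup V] [Module ℝ V]
    (T : Finset (Fin n)) (a : Fin n) (ha : a ∉ T) (hT : T.card = m)
    (hT' : (insert a T).card = m + 1) (f : V [⋀^Fin (m + 1)]→ₗ[ℝ] ℝ) (w : Fin n → V) :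
    f (fun c => w ((insert a T).orderEmbOfFin hT' c)) =
      (-1) ^ (T.filter (· < a)).card *
        f (Matrix.vecCons (w a) (fun c => w (T.orderEmbOfFin hT c))) := by
  have hmem : a ∈ Set.range ((insert a T).orderEmbOfFin hT') := by
    rw [Finset.range_orderEmbOfFin]; simp
  obtain ⟨p, hp⟩ := hmem
  set e := (insert a T).orderEmbOfFin hT' with he
  have h1 : (fun c => e (p.succAbove c)) = T.orderEmbOfFin hT := by
    apply Finset.orderEmbOfFin_unique
    · intro x
      have h2 : e (p.succAbove x) ∈ insert a T := Finset.orderEmbOfFin_mem _ _ _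
      rcases Finset.mem_insert.1 h2 with h3 | h3
      · rw [← hp] at h3
        exact absurd (e.injective h3) (Fin.succAbove_ne p x)
      · exact h3
    · exact e.strictMono.comp (Fin.strictMono_succAbove p)
  have h2 : (T.filter (· < a)).card = (p : ℕ) := by
    have : T.filter (· < a) = (Finset.Iio p).map e.toEmbedding := by
      ext x
      simp only [Finset.mem_filter, Finset.mem_map, Finset.mem_Iio]
      constructor
      · rintro ⟨hx, hxa⟩
        have : x ∈ Set.range e := by
          rw [he, Finset.range_orderEmbOfFin]; simp [hx]
        obtain ⟨q, rfl⟩ := this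
        refine ⟨q, ?_, rfl⟩
        rw [← hp] at hxa
        exact e.lt_iff_lt.1 hxa
      · rintro ⟨q, hq, rfl⟩
        have h4 : e q < a := by rw [← hp]; exact e.lt_iff_lt.2 hq
        have h5 : e q ∈ insert a T := Finset.orderEmbOfFin_mem _ _ _
        refine ⟨(Finset.mem_insert.1 h5).resolve_left h4.ne, h4⟩
    rw [this]; simp
  have h3 : (fun c => w (e c)) = p.insertNth (w a) (fun c => w (T.orderEmbOfFin hT c)) := by
    rw [← h1, eq_comm, Fin.insertNth_eq_iff]
    refine ⟨by rw [hp], rfl⟩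
  rw [h3, AlternatingMap.map_insertNth, h2]
  simp [Units.smul_def]

/-- determinant with first two rows `a`, `b` followed by `s` -/
noncomputable def dd {m : ℕ} (s : Fin m → Fin (m + 2) → ℝ) (a b : Fin (m + 2) → ℝ) : ℝ :=
  Matrix.detRowAlternating (R := ℝ) (n := Fin (m + 2)) (Matrix.vecCons a (Matrix.vecCons b s))

theorem dd_swap {m : ℕ} (s : Fin m → Fin (m + 2) → ℝ) (a b : Fin (m + 2) → ℝ) :
    dd s a b = - dd s b a := by
  unfold dd
  rw [← AlternatingMap.map_swap _ _ (i := 0) (j := 1) (by simp)]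
  congr 1
  ext c d
  refine Fin.cases ?_ (fun c => ?_) c
  · simp
  · refine Fin.cases ?_ (fun c => ?_) c
    · simp
    · rw [Function.comp_apply, Equiv.swap_apply_of_ne_of_ne]
      · simp
      · exact Fin.succ_ne_zero _
      · intro hh
        have := congrArg Fin.val hh
        simp at this

theorem dd_two {m : ℕ} (s : Fin m → Fin (m + 2) → ℝ) (a b x y : Fin (m + 2) → ℝ)
    (h0 : dd s a b = 0) : dd s a y * dd s b x = dd s a x * dd s b y := by
  have h1 : ∃ v, v ≠ 0 ∧ Matrix.vecMul v (Matrix.of (Matrix.vecCons a (Matrix.vecCons b s))) = 0 :=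
    Matrix.exists_vecMul_eq_zero_iff.2 h0
  obtain ⟨v, hv, hv0⟩ := h1
  have hsum : v 0 • a + v 1 • b + ∑ t : Fin m, v t.succ.succ • s t = 0 := by
    rw [← hv0]
    ext d
    simp [Matrix.vecMul, dotProduct, Fin.sum_univ_succ, add_assoc]
  have key : ∀ z, v 0 * dd s a z + v 1 * dd s b z = 0 := by
    intro z
    let F : (Fin (m + 2) → ℝ) →ₗ[ℝ] ℝ :=
      { toFun := fun a => dd s a z
        map_add' := fun p q => AlternatingMap.map_vecCons_add _ _ _ _
        map_smul' := fun c p => AlternatingMap.map_vecCons_smul _ _ _ _ }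
    have hF : ∀ t, F (s t) = 0 := by
      intro t
      change dd s (s t) z = 0
      refine AlternatingMap.map_eq_zero_of_eq Matrix.detRowAlternating _ (i := 0) (j := t.succ.succ) ?_
        (Fin.succ_ne_zero _).symm
      simp
    have := congrArg F hsum
    simp only [map_add, map_sum, map_smul, hF, smul_eq_mul, mul_zero, Finset.sum_const_zero,
      add_zero, map_zero] at this
    exact this
  by_cases hz : v 0 = 0 ∧ v 1 = 0
  · have hall : ∀ p q, dd s p q = 0 := by
      intro p q
      refine (Matrix.exists_vecMul_eq_zero_iff
        (M := Matrix.of (Matrix.vecCons p (Matrix.vecCons q s)))).1 ⟨v, hv, ?_⟩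
      rw [hz.1, hz.2] at hsum
      ext d
      have := congrFun hsum d
      simpa [Matrix.vecMul, dotProduct, Fin.sum_univ_succ, hz.1, hz.2] using this
    simp [hall]
  · have kx := key x
    have ky := key y
    by_cases h00 : v 0 = 0
    · have h11 : v 1 ≠ 0 := fun h => hz ⟨h00, h⟩
      have e1 : dd s b x = 0 := by simpa [h00, h11] using kx
      have e2 : dd s b y = 0 := by simpa [h00, h11] using ky
      rw [e1, e2]; simp
    · apply mul_left_cancel₀ h00
      linear_combination dd s b x * ky - dd s b y * kx

/-- column -/
def col {k n : ℕ} (A : Matrix (Fin k) (Fin n) ℝ) (a : Fin n) : Fin k → ℝ := fun r => A r a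

theorem minor_eq_dd {m n : ℕ} (A : Matrix (Fin (m + 2)) (Fin n) ℝ) (S : Finset (Fin n))
    (hS : S.card = m) (a b : Fin n) (hab : a < b) (ha : a ∉ S) (hb : b ∉ S) :
    minor A (insert a (insert b S)) =
      (-1) ^ (S.filter (· < a)).card * (-1) ^ (S.filter (· < b)).card *
        dd (fun c => col A (S.orderEmbOfFin hS c)) (col A a) (col A b) := by
  have hb' : (insert b S).card = m + 1 := by rw [Finset.card_insert_of_notMem hb, hS]
  have ha0 : a ∉ insert b S := by simp [ha, hab.ne]
  have ha' : (insert a (insert b S)).card = m + 1 + 1 := by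
    rw [Finset.card_insert_of_notMem ha0, hb']
  have e1 : minor A (insert a (insert b S)) =
      Matrix.detRowAlternating (R := ℝ) (n := Fin (m + 1 + 1))
        (fun c => col A ((insert a (insert b S)).orderEmbOfFin ha' c)) := by
    rw [minor, dif_pos ha', ← Matrix.det_transpose]
    rfl
  rw [e1, sort_insert_alt (insert b S) a ha0 hb' ha' _ (col A), ← AlternatingMap.curryLeft_apply_apply,
    sort_insert_alt S b hb hS hb' _ (col A)]
  have e2 : (insert b S).filter (· < a) = S.filter (· < a) := by
    rw [Finset.filter_insert, if_neg hab.not_gt]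
  rw [e2, mul_assoc]
  rfl

/-- if `h < i < j < ℓ`, `S` is a `(k−2)`-subset disjoint from `{h,i,j,ℓ}`, and
`Δ_{S∪{h,i}}(A) = 0` or `Δ_{S∪{j,ℓ}}(A) = 0`, then
`Δ_{S∪{h,ℓ}}(A) Δ_{S∪{i,j}}(A) = Δ_{S∪{h,j}}(A) Δ_{S∪{i,ℓ}}(A)`. -/
theorem two_term_plucker_case2 {k n : ℕ} (hk : 2 ≤ k)
    (A : Matrix (Fin k) (Fin n) ℝ)
    (h i j l : Fin n) (hhi : h < i) (hij : i < j) (hjl : j < l)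
    (S : Finset (Fin n)) (hS : S.card = k - 2)
    (hSh : h ∉ S) (hSi : i ∉ S) (hSj : j ∉ S) (hSl : l ∉ S)
    (hzero : minor A (insert h (insert i S)) = 0 ∨ minor A (insert j (insert l S)) = 0) :
    minor A (insert h (insert l S)) * minor A (insert i (insert j S)) =
      minor A (insert h (insert j S)) * minor A (insert i (insert l S)) := by
  obtain ⟨m, rfl⟩ : ∃ m, k = m + 2 := ⟨k - 2, by omega⟩
  have hS' : S.card = m := by simpa using hS
  rw [minor_eq_dd A S hS' h i hhi hSh hSi, minor_eq_dd A S hS' j l hjl hSj hSl] at hzero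
  rw [minor_eq_dd A S hS' h l (hhi.trans (hij.trans hjl)) hSh hSl,
    minor_eq_dd A S hS' i j hij hSi hSj, minor_eq_dd A S hS' h j (hhi.trans hij) hSh hSj,
    minor_eq_dd A S hS' i l (hij.trans hjl) hSi hSl]
  have hn : ∀ q : ℕ, ((-1 : ℝ)) ^ q ≠ 0 := fun q => pow_ne_zero _ (by norm_num)
  generalize (fun c => col A (S.orderEmbOfFin hS' c)) = s at *
  have main : dd s (col A h) (col A l) * dd s (col A i) (col A j) =
      dd s (col A h) (col A j) * dd s (col A i) (col A l) := by
    rcases hzero with h0 | h0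
    · have h1 := (mul_eq_zero.1 h0).resolve_left (mul_ne_zero (hn _) (hn _))
      exact dd_two s _ _ _ _ h1
    · have h1 := (mul_eq_zero.1 h0).resolve_left (mul_ne_zero (hn _) (hn _))
      have h2 := dd_two s _ _ (col A h) (col A i) h1
      rw [dd_swap s (col A h) (col A l), dd_swap s (col A i) (col A j),
        dd_swap s (col A h) (col A j), dd_swap s (col A i) (col A l)]
      linear_combination h2
  linear_combination (-1) ^ (S.filter (· < h)).card * (-1) ^ (S.filter (· < i)).card *
    (-1) ^ (S.filter (· < j)).card * (-1) ^ (S.filter (· < l)).card * main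
end

section
/- Let A be a real k×n matrix with k ≥ 2 all of whose k×k minors are nonnegative, let 1 ≤ h < i < j < ℓ ≤ n, and let S be a (k−2)-element subset of {1, …, n} disjoint from {h, i, j, ℓ}. If Δ_{S∪{h,j}}(A) = 0 or Δ_{S∪{i,ℓ}}(A) = 0, then both Δ_{S∪{h,ℓ}}(A) · Δ_{S∪{i,j}}(A) = 0 and Δ_{S∪{h,i}}(A) · Δ_{S∪{j,ℓ}}(A) = 0. (In particular, the configuration of Case 3 of the X-crossing theorem is impossible for points of the totally nonnegative Grassmannian with all four incident Plücker coordinates nonzero.) -/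
open scoped BigOperators

/-- determinant of the columns listed by `f` -/
noncomputable def colDet {k n : ℕ} (A : Matrix (Fin k) (Fin n) ℝ) (f : Fin k → Fin n) : ℝ :=
  Matrix.det (Matrix.of fun r c : Fin k => A r (f c))

/-- Vandermonde determinant of a list of column indices -/
noncomputable def vdm {k n : ℕ} (f : Fin k → Fin n) : ℝ :=
  Matrix.det (Matrix.vandermonde fun c : Fin k => (((f c : Fin n) : ℕ) : ℝ))

lemma vdm_pos {k n : ℕ} (f : Fin k → Fin n) (hf : StrictMono f) : 0 < vdm f := by
  unfold vdm
  rw [Matrix.det_vandermonde]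
  refine Finset.prod_pos fun i _ => Finset.prod_pos fun j hj => ?_
  have h1 : f i < f j := hf (Finset.mem_Ioi.1 hj)
  have h2 : ((f i : ℕ) : ℝ) < ((f j : ℕ) : ℝ) := by exact_mod_cast h1
  linarith

lemma minor_mul_abs {k n : ℕ} (A : Matrix (Fin k) (Fin n) ℝ) (I : Finset (Fin n))
    (hc : I.card = k) (f : Fin k → Fin n) (hf : Function.Injective f) (hI : ∀ c, f c ∈ I) :
    minor A I * |vdm f| = colDet A f * vdm f := by
  let e := I.orderIsoOfFin hc
  let s : Fin k → Fin k := fun c => e.symm ⟨f c, hI c⟩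
  have hs : Function.Injective s := by
    intro a b hab
    have := e.symm.injective hab
    exact hf (Subtype.ext_iff.1 this)
  let σ : Equiv.Perm (Fin k) := Equiv.ofBijective s (Finite.injective_iff_bijective.1 hs)
  have hσ : ∀ c, (e (σ c) : Fin n) = f c := by
    intro c
    change ((e (e.symm ⟨f c, hI c⟩)) : Fin n) = f c
    simp
  let g : Fin k → Fin n := fun c => (e c : Fin n)
  have hg : StrictMono g := fun a b hab => e.strictMono hab
  have h1 : colDet A f = (Equiv.Perm.sign σ : ℤ) * minor A I := by
    unfold minor colDet
    rw [dif_pos hc, ← Matrix.det_permute']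
    congr 1
    ext r c
    simp only [Matrix.of_apply, Matrix.submatrix_apply, id]
    rw [← hσ c]
  have h2 : vdm f = (Equiv.Perm.sign σ : ℤ) * vdm g := by
    unfold vdm
    rw [← Matrix.det_permute]
    congr 1
    ext r c
    simp only [Matrix.vandermonde_apply, Matrix.submatrix_apply, id]
    rw [← hσ r]
  have h3 := vdm_pos g hg
  rcases Int.units_eq_one_or (Equiv.Perm.sign σ) with h | h
  · simp [h] at h1 h2
    rw [h1, h2, abs_of_pos h3]
  · simp [h] at h1 h2
    rw [h1, h2, abs_neg, abs_of_pos h3]; ring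

/-- list `a, b, s` -/
def lst {m n : ℕ} (s : Fin m → Fin n) (a b : Fin n) : Fin (m + 2) → Fin n :=
  Fin.cons a (Fin.cons b s)

/-- product of differences -/
noncomputable def pd {m n : ℕ} (s : Fin m → Fin n) (a : Fin n) : ℝ :=
  ∏ c, (((s c : ℕ) : ℝ) - ((a : ℕ) : ℝ))

lemma vdm_lst {m n : ℕ} (s : Fin m → Fin n) (a b : Fin n) :
    vdm (lst s a b) = (((b : ℕ) : ℝ) - ((a : ℕ) : ℝ)) * pd s a * pd s b * vdm s := by
  unfold vdm pd
  simp only [Matrix.det_vandermonde, Fin.prod_univ_succ, Fin.prod_Ioi_zero, Fin.prod_Ioi_succ]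
  simp [lst]
  ring

lemma plucker {m n : ℕ} (A : Matrix (Fin (m + 2)) (Fin n) ℝ) (s : Fin m → Fin n)
    (x y z w : Fin n) :
    colDet A (lst s x y) * colDet A (lst s z w) =
      colDet A (lst s z y) * colDet A (lst s x w) + colDet A (lst s x z) * colDet A (lst s y w) := by
  let M : Fin n → Fin n → Matrix (Fin (m + 2)) (Fin (m + 2)) ℝ := fun a b =>
    Matrix.of fun r c => A r (lst s a b c)
  let L := fun v : Fin (m + 2) → ℝ => ((M w w).cramer v) 0
  have hL0 : ∀ a, L (fun r => A r a) = colDet A (lst s a w) := by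
    intro a
    simp only [L, Matrix.cramer_apply, colDet]
    congr 1
    ext r c
    refine Fin.cases ?_ (fun c => ?_) c
    · simp [lst]
    · simp [lst, M, Matrix.updateCol_apply]
  have hLs : ∀ c, colDet A (lst s (s c) w) = 0 := by
    intro c
    unfold colDet
    refine Matrix.det_zero_of_column_eq (i := 0) (j := c.succ.succ) (Fin.succ_ne_zero _).symm ?_
    intro r
    simp [lst]
  have key := Matrix.mulVec_cramer (M x y) (fun r => A r z)
  have key2 : L ((M x y).mulVec ((M x y).cramer (fun r => A r z))) =
      ∑ c, (M x y).cramer (fun r => A r z) c * colDet A (lst s (lst s x y c) w) := by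
    have : (M x y).mulVec ((M x y).cramer (fun r => A r z)) =
      ∑ c, (M x y).cramer (fun r => A r z) c • (fun r => A r (lst s x y c)) := by
      ext r
      simp [Matrix.mulVec, dotProduct, M, mul_comm]
    rw [this]
    simp only [← hL0]
    simp only [L, map_sum, map_smul, Finset.sum_apply, Pi.smul_apply, smul_eq_mul]
  rw [key] at key2
  have h1 : L ((M x y).det • (fun r => A r z)) = colDet A (lst s x y) * colDet A (lst s z w) := by
    rw [← hL0 z]
    simp only [L, map_smul, Pi.smul_apply, smul_eq_mul]
    rfl
  rw [h1, Fin.sum_univ_succ, Fin.sum_univ_succ] at key2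
  have h2 : (M x y).cramer (fun r => A r z) 0 = colDet A (lst s z y) := by
    simp only [Matrix.cramer_apply, colDet]
    congr 1
    ext r c
    refine Fin.cases ?_ (fun c => ?_) c
    · simp [lst]
    · simp [lst, M, Matrix.updateCol_apply]
  have h3 : (M x y).cramer (fun r => A r z) (Fin.succ 0) = colDet A (lst s x z) := by
    simp only [Matrix.cramer_apply, colDet]
    congr 1
    ext r c
    refine Fin.cases ?_ (fun c => Fin.cases ?_ (fun c => ?_) c) c
    · simp [lst, M, Matrix.updateCol_apply]
    · simp [lst]
    · have : c.succ.succ ≠ (Fin.succ 0 : Fin (m + 2)) := by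
        intro h; exact Fin.succ_ne_zero _ (Fin.succ_injective _ h)
      rw [Matrix.updateCol_ne this]
      simp [lst, M]
  rw [h2, h3] at key2
  rw [key2]
  simp [lst]
  apply Finset.sum_eq_zero
  intro c _
  have := hLs c
  simp only [lst] at this
  rw [this, mul_zero]

lemma minor_eq {m n : ℕ} (A : Matrix (Fin (m + 2)) (Fin n) ℝ) (S : Finset (Fin n))
    (hS : S.card = m) (a b : Fin n) (hab : a < b) (ha : a ∉ S) (hb : b ∉ S) :
    minor A (insert a (insert b S)) =
      ((pd (S.orderEmbOfFin hS) a / |pd (S.orderEmbOfFin hS) a|) *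
       (pd (S.orderEmbOfFin hS) b / |pd (S.orderEmbOfFin hS) b|)) *
        colDet A (lst (S.orderEmbOfFin hS) a b) := by
  set s := S.orderEmbOfFin hS with hs
  have hmem : ∀ c, s c ∈ S := fun c => S.orderEmbOfFin_mem hS c
  have hp : ∀ a ∉ S, pd s a ≠ 0 := by
    intro a ha
    unfold pd
    refine Finset.prod_ne_zero_iff.2 fun c _ h => ha ?_
    have : ((s c : ℕ) : ℝ) = (a : ℕ) := by linarith
    have : s c = a := Fin.ext (by exact_mod_cast this)
    exact this ▸ hmem c
  have hinj : Function.Injective (lst s a b) := by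
    unfold lst
    rw [Fin.cons_injective_iff, Fin.cons_injective_iff]
    refine ⟨?_, ?_, s.injective⟩
    · rintro ⟨c, hc⟩
      revert hc
      refine Fin.cases ?_ (fun c => ?_) c
      · simp; exact hab.ne'
      · simp only [Fin.cons_succ]; intro h; exact ha (h ▸ hmem c)
    · rintro ⟨c, hc⟩; exact hb (hc ▸ hmem c)
  have hI : ∀ c, lst s a b c ∈ insert a (insert b S) := by
    intro c
    refine Fin.cases ?_ (fun c => Fin.cases ?_ (fun c => ?_) c) c
    · simp [lst]
    · simp [lst]
    · simp [lst, hmem]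
  have hcard : (insert a (insert b S)).card = m + 2 := by
    rw [Finset.card_insert_of_notMem, Finset.card_insert_of_notMem hb, hS]
    simp [ha, hab.ne]
  have h := minor_mul_abs A _ hcard _ hinj hI
  have hW : 0 < vdm s := vdm_pos _ s.strictMono
  have hd : 0 < ((b : ℕ) : ℝ) - ((a : ℕ) : ℝ) := by
    have : ((a : ℕ) : ℝ) < ((b : ℕ) : ℝ) := by exact_mod_cast hab
    linarith
  rw [vdm_lst, abs_mul, abs_mul, abs_mul, abs_of_pos hW, abs_of_pos hd] at h
  have hpa := abs_pos.2 (hp a ha)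
  have hpb := abs_pos.2 (hp b hb)
  have hne := (mul_pos hd hW).ne'
  have h' : minor A (insert a (insert b S)) * (|pd s a| * |pd s b|) =
      pd s a * pd s b * colDet A (lst s a b) := by
    apply mul_right_cancel₀ hne
    linear_combination h
  rw [div_mul_div_comm, div_mul_eq_mul_div, eq_div_iff (mul_pos hpa hpb).ne', h']

/-- if `A` is totally nonnegative, `h < i < j < ℓ`, `S` is a `(k−2)`-subset
disjoint from `{h,i,j,ℓ}`, and `Δ_{S∪{h,j}}(A) = 0` or `Δ_{S∪{i,ℓ}}(A) = 0`, then both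
`Δ_{S∪{h,ℓ}}(A) Δ_{S∪{i,j}}(A) = 0` and `Δ_{S∪{h,i}}(A) Δ_{S∪{j,ℓ}}(A) = 0`
(so Case 3 of the X-crossing theorem is impossible on the totally nonnegative
Grassmannian when all four incident Plücker coordinates are nonzero). -/
theorem case3_impossible_tnn {k n : ℕ} (hk : 2 ≤ k)
    (A : Matrix (Fin k) (Fin n) ℝ)
    (hnonneg : ∀ I : Finset (Fin n), 0 ≤ minor A I)
    (h i j l : Fin n) (hhi : h < i) (hij : i < j) (hjl : j < l)
    (S : Finset (Fin n)) (hS : S.card = k - 2)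
    (hSh : h ∉ S) (hSi : i ∉ S) (hSj : j ∉ S) (hSl : l ∉ S)
    (hzero : minor A (insert h (insert j S)) = 0 ∨ minor A (insert i (insert l S)) = 0) :
    minor A (insert h (insert l S)) * minor A (insert i (insert j S)) = 0 ∧
    minor A (insert h (insert i S)) * minor A (insert j (insert l S)) = 0 := by
  obtain ⟨m, rfl⟩ : ∃ m, k = m + 2 := ⟨k - 2, by omega⟩
  have hS' : S.card = m := by omega
  have n1 := hnonneg (insert h (insert l S))
  have n2 := hnonneg (insert i (insert j S))
  have n3 := hnonneg (insert h (insert i S))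
  have n4 := hnonneg (insert j (insert l S))
  have key : minor A (insert h (insert j S)) * minor A (insert i (insert l S)) =
      minor A (insert h (insert l S)) * minor A (insert i (insert j S)) +
      minor A (insert h (insert i S)) * minor A (insert j (insert l S)) := by
    rw [minor_eq A S hS' h j (hhi.trans hij) hSh hSj, minor_eq A S hS' i l (hij.trans hjl) hSi hSl,
      minor_eq A S hS' h l (hhi.trans (hij.trans hjl)) hSh hSl, minor_eq A S hS' i j hij hSi hSj,
      minor_eq A S hS' h i hhi hSh hSi, minor_eq A S hS' j l hjl hSj hSl]
    have hp := plucker A (S.orderEmbOfFin hS') h j i l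
    generalize pd (S.orderEmbOfFin hS') h / |pd (S.orderEmbOfFin hS') h| = e1
    generalize pd (S.orderEmbOfFin hS') i / |pd (S.orderEmbOfFin hS') i| = e2
    generalize pd (S.orderEmbOfFin hS') j / |pd (S.orderEmbOfFin hS') j| = e3
    generalize pd (S.orderEmbOfFin hS') l / |pd (S.orderEmbOfFin hS') l| = e4
    linear_combination (e1 * e2 * e3 * e4) * hp
  have hz : minor A (insert h (insert j S)) * minor A (insert i (insert l S)) = 0 :=
    mul_eq_zero.2 hzero
  rw [hz] at key
  have p1 := mul_nonneg n1 n2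
  have p2 := mul_nonneg n3 n4
  constructor <;> linarith
end

section
/- Let n ≥ 3 and let I_3 ⊂ I_4 ⊂ ⋯ ⊂ I_n = {1, …, n} be a chain of subsets with |I_ℓ| = ℓ for each ℓ and with 1, n ∈ I_3. Define collections D_ℓ of 2-element subsets of {1, …, n} recursively: D_3 consists of the three 2-element subsets of I_3; and if I_{ℓ+1} = I_ℓ ∪ {m}, let j_s = max{ j ∈ I_ℓ : j < m } and j_{s+1} = min{ j ∈ I_ℓ : j > m } and set D_{ℓ+1} = D_ℓ ∪ { {j_s, m}, {m, j_{s+1}} }. Then D_n has exactly 2n − 3 elements; D_n contains {p, p+1} for every 1 ≤ p ≤ n−1 as well as {1, n}; and D_n is noncrossing, i.e. there are no a < b < c < d with {a,c} ∈ D_n and {b,d} ∈ D_n. Consequently D_n consists of the n boundary edges together with the n − 3 diagonals of a triangulation of a convex n-gon with vertices labeled 1, …, n in order. -/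
open scoped BigOperators

theorem pair_aux {a b x y : ℕ} (hab : a < b) (hxy : x < y)
    (h : ({a, b} : Finset ℕ) = {x, y}) : a = x ∧ b = y := by
  have h1 : a ∈ ({x, y} : Finset ℕ) := h ▸ (by simp)
  have h2 : b ∈ ({x, y} : Finset ℕ) := h ▸ (by simp)
  simp only [Finset.mem_insert, Finset.mem_singleton] at h1 h2
  omega

/-- let `n ≥ 3` and `I 3 ⊂ I 4 ⊂ ⋯ ⊂ I n = {1,…,n}` be a flag of subsets
with `|I ℓ| = ℓ` and `1, n ∈ I 3`.  Define `D 3` to be the three 2-subsets of `I 3`, and if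
`I (ℓ+1) = I ℓ ∪ {m}` with `j_s = max{j ∈ I ℓ : j < m}` and `j_{s+1} = min{j ∈ I ℓ : j > m}`,
set `D (ℓ+1) = D ℓ ∪ {{j_s, m}, {m, j_{s+1}}}`.  Then `D n` has exactly `2n − 3` elements,
contains every boundary edge `{p, p+1}` (`1 ≤ p ≤ n−1`) as well as `{1, n}`, and is
noncrossing; hence `D n` consists of the boundary edges and the `n − 3` diagonals of a
triangulation of a convex `n`-gon. -/
theorem flag_of_exponentials_gives_triangulation {n : ℕ} (hn : 3 ≤ n)
    (I : ℕ → Finset ℕ)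
    (hcard : ∀ ℓ, 3 ≤ ℓ → ℓ ≤ n → (I ℓ).card = ℓ)
    (hchain : ∀ ℓ, 3 ≤ ℓ → ℓ < n → I ℓ ⊆ I (ℓ + 1))
    (hIn : I n = Finset.Icc 1 n)
    (h1 : 1 ∈ I 3) (hn3 : n ∈ I 3)
    (D : ℕ → Finset (Finset ℕ))
    (hD3 : D 3 = Finset.powersetCard 2 (I 3))
    (hstep : ∀ ℓ, 3 ≤ ℓ → ℓ < n → ∀ m js js1 : ℕ,
      m ∈ I (ℓ + 1) → m ∉ I ℓ →
      js ∈ I ℓ → js < m → (∀ j ∈ I ℓ, j < m → j ≤ js) →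
      js1 ∈ I ℓ → m < js1 → (∀ j ∈ I ℓ, m < j → js1 ≤ j) →
      D (ℓ + 1) = insert {js, m} (insert {m, js1} (D ℓ))) :
    (D n).card = 2 * n - 3 ∧
    (∀ p : ℕ, 1 ≤ p → p ≤ n - 1 → ({p, p + 1} : Finset ℕ) ∈ D n) ∧
    ({1, n} : Finset ℕ) ∈ D n ∧
    (∀ a b c d : ℕ, a < b → b < c → c < d →
      ({a, c} : Finset ℕ) ∈ D n → ({b, d} : Finset ℕ) ∈ D n → False) := by
  have hsub : ∀ k ℓ, 3 ≤ ℓ → ℓ + k = n → I ℓ ⊆ Finset.Icc 1 n := by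
    intro k
    induction k with
    | zero => intro ℓ _ h; simp at h; subst h; rw [hIn]
    | succ k ih =>
      intro ℓ h3 h
      exact (hchain ℓ h3 (by omega)).trans (ih (ℓ + 1) (by omega) (by omega))
  have key : ∀ ℓ, 3 ≤ ℓ → ℓ ≤ n →
      1 ∈ I ℓ ∧ n ∈ I ℓ ∧ (D ℓ).card + 3 = 2 * ℓ ∧ (∀ e ∈ D ℓ, e ⊆ I ℓ) ∧
      (∀ a ∈ I ℓ, ∀ b ∈ I ℓ, a < b → (∀ j ∈ I ℓ, ¬ (a < j ∧ j < b)) →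
        ({a, b} : Finset ℕ) ∈ D ℓ) ∧ ({1, n} : Finset ℕ) ∈ D ℓ ∧
      (∀ a b c d : ℕ, a < b → b < c → c < d →
        ({a, c} : Finset ℕ) ∈ D ℓ → ({b, d} : Finset ℕ) ∈ D ℓ → False) := by
    intro ℓ h3
    induction ℓ, h3 using Nat.le_induction with
    | base =>
      intro _
      have hc := hcard 3 le_rfl hn
      refine ⟨h1, hn3, ?_, ?_, ?_, ?_, ?_⟩
      · rw [hD3, Finset.card_powersetCard, hc]; decide
      · intro e he
        rw [hD3, Finset.mem_powersetCard] at he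
        exact he.1
      · intro a ha b hb hab _
        rw [hD3, Finset.mem_powersetCard]
        exact ⟨by simp [Finset.insert_subset_iff, ha, hb], Finset.card_pair hab.ne⟩
      · rw [hD3, Finset.mem_powersetCard]
        exact ⟨by simp [Finset.insert_subset_iff, h1, hn3], Finset.card_pair (by omega)⟩
      · intro a b c d hab hbc hcd h h'
        rw [hD3, Finset.mem_powersetCard] at h h'
        have hs : ({a, b, c, d} : Finset ℕ) ⊆ I 3 := by
          have e1 := h.1
          have e2 := h'.1
          simp only [Finset.insert_subset_iff, Finset.singleton_subset_iff] at e1 e2 ⊢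
          tauto
        have := Finset.card_le_card hs
        rw [hc, Finset.card_insert_of_notMem (by simp; omega),
          Finset.card_insert_of_notMem (by simp; omega),
          Finset.card_pair (by omega)] at this
        omega
    | succ ℓ h3 ih =>
      intro hle
      obtain ⟨i1, iN, ic, isub, icon, i1n, inc⟩ := ih (by omega)
      have hch := hchain ℓ h3 (by omega)
      have hc1 := hcard ℓ h3 (by omega)
      have hc2 := hcard (ℓ + 1) (by omega) hle
      obtain ⟨m, hm⟩ : ∃ m, I (ℓ + 1) \ I ℓ = {m} := by
        rw [← Finset.card_eq_one, Finset.card_sdiff_of_subset hch]; omega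
      have hmem : ∀ x, x ∈ I (ℓ + 1) → x = m ∨ x ∈ I ℓ := by
        intro x hx
        by_cases hxl : x ∈ I ℓ
        · exact Or.inr hxl
        · have : x ∈ I (ℓ + 1) \ I ℓ := Finset.mem_sdiff.2 ⟨hx, hxl⟩
          rw [hm] at this
          exact Or.inl (by simpa using this)
      have hm' : m ∈ I (ℓ + 1) \ I ℓ := by rw [hm]; simp
      obtain ⟨hmI, hmn⟩ := Finset.mem_sdiff.1 hm'
      have hmr := Finset.mem_Icc.1 (hsub (n - (ℓ + 1)) (ℓ + 1) (by omega) (by omega) hmI)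
      have hm1 : m ≠ 1 := fun h => hmn (h ▸ i1)
      have hmN : m ≠ n := fun h => hmn (h ▸ iN)
      obtain ⟨js, hjs, hjmax⟩ := Finset.exists_max_image ((I ℓ).filter (· < m)) id
        ⟨1, by simp [i1]; omega⟩
      obtain ⟨js1, hjs1, hjmin⟩ := Finset.exists_min_image ((I ℓ).filter (m < ·)) id
        ⟨n, by simp [iN]; omega⟩
      simp only [Finset.mem_filter, id, and_imp] at hjs hjs1 hjmax hjmin
      obtain ⟨hjs, hjsm⟩ := hjs
      obtain ⟨hjs1, hjs1m⟩ := hjs1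
      have hD := hstep ℓ h3 (by omega) m js js1 hmI hmn hjs hjsm hjmax hjs1 hjs1m hjmin
      have hsubD : ∀ e ∈ D (ℓ + 1), e ⊆ I (ℓ + 1) := by
        intro e he
        rw [hD, Finset.mem_insert, Finset.mem_insert] at he
        rcases he with rfl | rfl | he
        · simp [Finset.insert_subset_iff, hmI, hch hjs]
        · simp [Finset.insert_subset_iff, hmI, hch hjs1]
        · exact (isub e he).trans hch
      have hcases : ∀ a b, a < b → ({a, b} : Finset ℕ) ∈ D (ℓ + 1) →
          (a = js ∧ b = m) ∨ (a = m ∧ b = js1) ∨ ({a, b} : Finset ℕ) ∈ D ℓ := by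
        intro a b hab he
        rw [hD, Finset.mem_insert, Finset.mem_insert] at he
        rcases he with he | he | he
        · exact Or.inl (pair_aux hab hjsm he)
        · exact Or.inr (Or.inl (pair_aux hab hjs1m he))
        · exact Or.inr (Or.inr he)
      have hbet1 : ∀ x ∈ I (ℓ + 1), js < x → x < m → False := by
        intro x hx h h'
        rcases hmem x hx with rfl | hx
        · omega
        · have := hjmax x hx h'; omega
      have hbet2 : ∀ x ∈ I (ℓ + 1), m < x → x < js1 → False := by
        intro x hx h h'
        rcases hmem x hx with rfl | hx
        · omega
        · have := hjmin x hx h; omega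
      refine ⟨hch i1, hch iN, ?_, hsubD, ?_, ?_, ?_⟩
      · rw [hD, Finset.card_insert_of_notMem, Finset.card_insert_of_notMem]
        · omega
        · intro h
          exact hmn (isub _ h (by simp))
        · rw [Finset.mem_insert]
          rintro (h | h)
          · have := pair_aux hjsm hjs1m h; omega
          · exact hmn (isub _ h (by simp))
      · intro a ha b hb hab hno
        rw [hD, Finset.mem_insert, Finset.mem_insert]
        rcases hmem a ha with rfl | ha'
        · rcases hmem b hb with rfl | hb'
          · omega
          · have e1 := hjmin b hb' hab
            have e2 := hno js1 (hch hjs1)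
            have : b = js1 := by omega
            subst this
            simp
        · rcases hmem b hb with rfl | hb'
          · have e1 := hjmax a ha' hab
            have e2 := hno js (hch hjs)
            have : a = js := by omega
            subst this
            simp
          · exact Or.inr (Or.inr (icon a ha' b hb' hab fun j hj => hno j (hch hj)))
      · rw [hD, Finset.mem_insert, Finset.mem_insert]
        exact Or.inr (Or.inr i1n)
      · intro a b c d hab hbc hcd h h'
        have hb : b ∈ I (ℓ + 1) := hsubD _ h' (by simp)
        have hc : c ∈ I (ℓ + 1) := hsubD _ h (by simp)
        rcases hcases a c (by omega) h with ⟨rfl, rfl⟩ | ⟨rfl, rfl⟩ | h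
        · exact hbet1 b hb hab hbc
        · exact hbet2 b hb hab hbc
        rcases hcases b d (by omega) h' with ⟨rfl, rfl⟩ | ⟨rfl, rfl⟩ | h'
        · exact hbet1 c hc hbc hcd
        · exact hbet2 c hc hbc hcd
        exact inc a b c d hab hbc hcd h h'
  obtain ⟨_, _, kc, _, kcon, k1n, knc⟩ := key n hn le_rfl
  refine ⟨by omega, ?_, k1n, knc⟩
  intro p hp hp'
  refine kcon p ?_ (p + 1) ?_ (by omega) (fun j _ => by omega)
  · rw [hIn, Finset.mem_Icc]; omega
  · rw [hIn, Finset.mem_Icc]; omega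
end
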